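/- Let z* ∈ X and assume z − z* ∈ T₀(z*) for every z ∈ X. If there exist u* ∈ ℝ^s with u* ≥ 0 and v* ∈ ℝ^r (not necessarily nonnegative) such that ∇g(z*) + Σᵢ uᵢ* ∇gᵢ(z*) + Σⱼ vⱼ* ∇hⱼ(z*) = 0 and uᵢ* gᵢ(z*) = 0 for every i = 1,…,s, then g(z*) ≤ g(z) for every z ∈ X. -/

import Mathlib

/-- A convex function lies above its tangent hyperplanes. -/
theorem ConvexOn.add_fderiv_sub_le {E : Type*} [NormedAddCommGroup E] [NormedSpace ℝ E]
    {f : E → ℝ} {x : E} (hf : ConvexOn ℝ Set.univ f) (hd : DifferentiableAt ℝ f x) (y : E) :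
    f x + fderiv ℝ f x (y - x) ≤ f y := by
  have hline : ConvexOn ℝ Set.univ (f ∘ AffineMap.lineMap (k := ℝ) x y) :=
    hf.comp_affineMap _
  have hderiv : HasDerivAt (f ∘ AffineMap.lineMap (k := ℝ) x y) (fderiv ℝ f x (y - x)) 0 :=
    HasFDerivAt.comp_hasDerivAt_of_eq 0 hd.hasFDerivAt AffineMap.hasDerivAt_lineMap (by simp)
  have hslope := hline.le_slope_of_hasDerivAt (Set.mem_univ 0) (Set.mem_univ 1) one_pos hderiv
  simp only [slope_def_field, Function.comp_apply, AffineMap.lineMap_apply_zero,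
    AffineMap.lineMap_apply_one, sub_zero, div_one] at hslope
  linarith

/-- Theorem 5: assume every feasible direction `z − zs` (for `z ∈ X`) lies in the
cone `T₀(zs)`. If KKT multipliers `u ≥ 0` and `v ∈ ℝ^r` (not necessarily
nonnegative) exist, then `zs` is a global minimizer of `g` over `X`. -/
theorem stmt_7 {n s r : ℕ}
    (g : EuclideanSpace ℝ (Fin n) → ℝ)
    (G : Fin s → EuclideanSpace ℝ (Fin n) → ℝ)
    (H : Fin r → EuclideanSpace ℝ (Fin n) → ℝ)
    (hg : ConvexOn ℝ Set.univ g) (hgd : Differentiable ℝ g)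
    (hG : ∀ i, ConvexOn ℝ Set.univ (G i)) (hGd : ∀ i, Differentiable ℝ (G i))
    (hH : ∀ j, ConvexOn ℝ Set.univ (H j)) (hHd : ∀ j, Differentiable ℝ (H j))
    (X : Set (EuclideanSpace ℝ (Fin n)))
    (hX : X = {z | (∀ i, G i z ≤ 0) ∧ (∀ j, H j z = 0)})
    (zs : EuclideanSpace ℝ (Fin n)) (hzs : zs ∈ X)
    (T₀ : Set (EuclideanSpace ℝ (Fin n)))
    (hT₀ : T₀ = {d | (∀ i, G i zs + fderiv ℝ (G i) zs d ≤ 0) ∧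
                     (∀ j, fderiv ℝ (H j) zs d = 0)})
    (hdir : ∀ z ∈ X, (z - zs) ∈ T₀)
    (u : Fin s → ℝ) (v : Fin r → ℝ) (hu : ∀ i, 0 ≤ u i)
    (hstat : fderiv ℝ g zs + ∑ i, u i • fderiv ℝ (G i) zs
        + ∑ j, v j • fderiv ℝ (H j) zs = 0)
    (hcomp : ∀ i, u i * G i zs = 0) :
    ∀ z ∈ X, g zs ≤ g z := by
  intro z hz
  have hd := hdir z hz
  rw [hT₀] at hd
  obtain ⟨hdG, hdH⟩ := hd
  have hineq : ∑ i, u i * fderiv ℝ (G i) zs (z - zs) ≤ 0 := by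
    refine Finset.sum_nonpos fun i _ => ?_
    have := mul_nonpos_of_nonneg_of_nonpos (hu i) (hdG i)
    rwa [mul_add, hcomp i, zero_add] at this
  have heq : ∑ j, v j * fderiv ℝ (H j) zs (z - zs) = 0 :=
    Finset.sum_eq_zero fun j _ => by rw [hdH j, mul_zero]
  have happly := DFunLike.congr_fun hstat (z - zs)
  simp only [add_apply, sum_apply,
    smul_apply, smul_eq_mul, zero_apply] at happly
  have htangent := hg.add_fderiv_sub_le (hgd zs) z
  linarith
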